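/- Let b = (b₁,b₂) : ℝ² → ℝ² be a twice continuously differentiable vector field and let ∇⊥ := (∂₂, −∂₁). Then pointwise |∇b|² = |∇·b|² + |∇⊥·b|² + ∇⊥·(b₁∇b₂ − b₂∇b₁). Consequently, for a pair A = (A₁,A₂) of 𝔰𝔬(3)-valued fields on 𝕋² satisfying the zero-curvature relation ∂₁A₂ − ∂₂A₁ + [A₁,A₂] = 0, applying this identity to each matrix component yields pointwise |∇A|² = |∇·A|² + |[A₁,A₂]|² − ∇⊥· Tr(A₁∇A₂ − A₂∇A₁). -/

import Mathlib

open MeasureTheory Filter Set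
open scoped ENNReal NNReal InnerProductSpace Topology

noncomputable section

/-- `ℝ³` as a Euclidean space. -/
abbrev R3 : Type := EuclideanSpace ℝ (Fin 3)

/-- The cross product on `ℝ³`. -/
def cross3 (a b : R3) : R3 :=
  (WithLp.equiv 2 (Fin 3 → ℝ)).symm
    ![(WithLp.equiv 2 (Fin 3 → ℝ) a) 1 * (WithLp.equiv 2 (Fin 3 → ℝ) b) 2 -
        (WithLp.equiv 2 (Fin 3 → ℝ) a) 2 * (WithLp.equiv 2 (Fin 3 → ℝ) b) 1,
      (WithLp.equiv 2 (Fin 3 → ℝ) a) 2 * (WithLp.equiv 2 (Fin 3 → ℝ) b) 0 -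
        (WithLp.equiv 2 (Fin 3 → ℝ) a) 0 * (WithLp.equiv 2 (Fin 3 → ℝ) b) 2,
      (WithLp.equiv 2 (Fin 3 → ℝ) a) 0 * (WithLp.equiv 2 (Fin 3 → ℝ) b) 1 -
        (WithLp.equiv 2 (Fin 3 → ℝ) a) 1 * (WithLp.equiv 2 (Fin 3 → ℝ) b) 0]

/-- Points of the plane; the flat torus `𝕋²` is modeled by `1`-periodic functions on `ℝ²`. -/
abbrev Pt : Type := ℝ × ℝ

/-- A fundamental domain for the torus `𝕋² = ℝ²/ℤ²`. -/
def QT : Set Pt := Set.Icc (0 : ℝ) 1 ×ˢ Set.Icc (0 : ℝ) 1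

/-- The open Euclidean ball `B_r(x) ⊆ ℝ²`. -/
def ball2 (x : Pt) (r : ℝ) : Set Pt := {y : Pt | (y.1 - x.1) ^ 2 + (y.2 - x.2) ^ 2 < r ^ 2}

/-- `1`-periodicity in both variables: such functions are identified with maps on `𝕋²`. -/
def Per {V : Type*} (f : Pt → V) : Prop :=
  ∀ x : Pt, f (x.1 + 1, x.2) = f x ∧ f (x.1, x.2 + 1) = f x

/-- The standard basis directions of `ℝ²`. -/
def e2 : Fin 2 → Pt := ![((1 : ℝ), (0 : ℝ)), ((0 : ℝ), (1 : ℝ))]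

variable {V : Type*} [NormedAddCommGroup V] [NormedSpace ℝ V]

/-- The partial derivative `∂ᵢ f`. -/
def pd (i : Fin 2) (f : Pt → V) : Pt → V := fun x => fderiv ℝ f x (e2 i)

/-- The Laplacian `Δ f = ∂₁∂₁ f + ∂₂∂₂ f`. -/
def lap (f : Pt → V) : Pt → V := fun x => pd 0 (pd 0 f) x + pd 1 (pd 1 f) x

/-- Time derivative `∂ₜ u` of a time dependent field. -/
def tderiv (u : ℝ → Pt → V) : ℝ → Pt → V := fun t x => deriv (fun s => u s x) t

/-- The squared `L²`-norm over a subset `s` of the plane. -/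
def L2SqOn (s : Set Pt) (f : Pt → V) : ℝ := ∫ x in s, ‖f x‖ ^ 2

/-- The squared `L²(𝕋²)`-norm. -/
def L2Sq (f : Pt → V) : ℝ := L2SqOn QT f

/-- The `L²(𝕋²)`-norm. -/
def L2Norm (f : Pt → V) : ℝ := Real.sqrt (L2Sq f)

/-- The sup-norm over a subset of the plane. -/
def LinfOn (s : Set Pt) (f : Pt → V) : ℝ := ⨆ x ∈ s, ‖f x‖

/-- The squared Sobolev `H^k(𝕋²)`-norm. -/
def HkSq (k : ℕ) (f : Pt → V) : ℝ :=
  ∑ j ∈ Finset.range (k + 1), ∫ x in QT, ‖iteratedFDeriv ℝ j f x‖ ^ 2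

/-- The Sobolev `H^k(𝕋²)`-norm. -/
def HkNorm (k : ℕ) (f : Pt → V) : ℝ := Real.sqrt (HkSq k f)

/-- Membership in the Sobolev space `H^k(𝕋²; V)` (modeled via classical derivatives). -/
def MemHk (k : ℕ) (f : Pt → V) : Prop :=
  Per f ∧ ∀ j ∈ Finset.range (k + 1),
    Integrable (fun x => ‖iteratedFDeriv ℝ j f x‖ ^ 2) (volume.restrict QT)

/-- `|∇f|²` pointwise. -/
def gradNormSq (f : Pt → R3) (x : Pt) : ℝ := ‖pd 0 f x‖ ^ 2 + ‖pd 1 f x‖ ^ 2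

/-- The local Dirichlet integral `∫_s |∇f|²`. -/
def dirichOn (s : Set Pt) (f : Pt → R3) : ℝ := ∫ x in s, gradNormSq f x

/-- The Dirichlet integral `∫_{𝕋²} |∇f|²` (twice the Dirichlet energy). -/
def dirich (f : Pt → R3) : ℝ := dirichOn QT f

/-- `3 × 3` matrices, realized as continuous linear maps of `ℝ³`. -/
abbrev M3 : Type := R3 →L[ℝ] R3

/-- The divergence `∇ ⬝ a = ∂₁ a₁ + ∂₂ a₂` of a matrix-valued field `a : 𝕋² → ℝ² ⊗ ℝ^{3×3}`. -/
def divG (a : Pt → Fin 2 → M3) : Pt → M3 := fun x =>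
  fderiv ℝ (fun y => a y 0) x (e2 0) + fderiv ℝ (fun y => a y 1) x (e2 1)

/-- `a² = a₁² + a₂²`. -/
def sqG (a : Pt → Fin 2 → M3) : Pt → M3 := fun x =>
  (a x 0).comp (a x 0) + (a x 1).comp (a x 1)

/-- `a·∇v + (∇·a) v + a² v`. -/
def gaugeOp (a : Pt → Fin 2 → M3) (v : Pt → R3) : Pt → R3 := fun x =>
  a x 0 (pd 0 v x) + a x 1 (pd 1 v x) + divG a x (v x) + sqG a x (v x)

/-- The squared covariant gradient `|∇_a v|² = |∇v + a v|²` pointwise. -/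
def covGradSq (a : Pt → Fin 2 → M3) (v : Pt → R3) (x : Pt) : ℝ :=
  ‖pd 0 v x + a x 0 (v x)‖ ^ 2 + ‖pd 1 v x + a x 1 (v x)‖ ^ 2

/-- The covariant Laplacian `Δ_a v = Δ v + a·∇v + (∇·a) v + a² v`. -/
def covLap (a : Pt → Fin 2 → M3) (v : Pt → R3) : Pt → R3 := fun x =>
  lap v x + gaugeOp a v x

/-- The perturbation `F(t,a,v)` of the Landau–Lifshitz terms arising from the gauge `a`. -/
def Fpert (α : ℝ) (a : Pt → Fin 2 → M3) (v : Pt → R3) : Pt → R3 := fun x =>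
  α • gaugeOp a v x
    + α • ((‖a x 0 (v x)‖ ^ 2 + ‖a x 1 (v x)‖ ^ 2) • v x
        + (2 * (⟪pd 0 v x, a x 0 (v x)⟫_ℝ + ⟪pd 1 v x, a x 1 (v x)⟫_ℝ)) • v x)
    - cross3 (v x) (gaugeOp a v x)

/-- `H(t,a,v) = α(Δv + |∇v|² v) − v × Δv + F(t,a,v)`, the right-hand side of the
gauged Landau–Lifshitz–Gilbert equation. -/
def Hfun (α : ℝ) (a : Pt → Fin 2 → M3) (v : Pt → R3) : Pt → R3 := fun x =>
  α • (lap v x + gradNormSq v x • v x) - cross3 (v x) (lap v x) + Fpert α a v x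

/-- The gauged (transformed) Landau–Lifshitz–Gilbert equation
`∂ₜ u = α(Δ_A u + |∇_A u|² u) − u × Δ_A u` at `(t,x)`. -/
def GaugedLLG (α : ℝ) (A : ℝ → Pt → Fin 2 → M3) (u : ℝ → Pt → R3) (t : ℝ) (x : Pt) : Prop :=
  tderiv u t x =
    α • (covLap (A t) (u t) x + covGradSq (A t) (u t) x • u t x)
      - cross3 (u t x) (covLap (A t) (u t) x)

/-- The `L²(𝕋²)` pairing. -/
def pairing (f g : Pt → R3) : ℝ := ∫ x in QT, ⟪f x, g x⟫_ℝ

/-- The `H¹(𝕋²)` inner product. -/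
def H1inner (f g : Pt → R3) : ℝ :=
  pairing f g + ∑ i : Fin 2, ∫ x in QT, ⟪pd i f x, pd i g x⟫_ℝ

/-- Continuity in `L²(𝕋²)` on a time set. -/
def ContL2On (u : ℝ → Pt → R3) (s : Set ℝ) : Prop :=
  ∀ t ∈ s, Tendsto (fun r => L2Sq (fun x => u r x - u t x)) (nhdsWithin t s) (nhds 0)

/-- Continuity in `H^k(𝕋²)` on a time set. -/
def ContHkOn (k : ℕ) (u : ℝ → Pt → V) (s : Set ℝ) : Prop :=
  ∀ t ∈ s, Tendsto (fun r => HkSq k (fun x => u r x - u t x)) (nhdsWithin t s) (nhds 0)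

/-- `γ`-Hölder continuity with constant `C` as a map `[0,T] → H¹`, for a gauge field. -/
def HolderE (γ T C : ℝ) (a : ℝ → Pt → Fin 2 → M3) : Prop :=
  ∀ s ∈ Set.Icc (0 : ℝ) T, ∀ t ∈ Set.Icc (0 : ℝ) T,
    HkNorm 1 (fun x => a s x - a t x) ≤ C * |s - t| ^ γ

/-- The norm of the parameter space `𝓔 = C^γ([0,T]; H¹(𝕋²; ℝ²⊗𝔰𝔬(3)))`. -/
def EHolNorm (γ T : ℝ) (a : ℝ → Pt → Fin 2 → M3) : ℝ :=
  (⨆ t ∈ Set.Icc (0 : ℝ) T, HkNorm 1 (a t)) + sInf {C : ℝ | 0 ≤ C ∧ HolderE γ T C a}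

/-- Membership in the parameter space `𝓔 = C^γ([0,T]; H¹(𝕋²; ℝ²⊗𝔰𝔬(3)))`. -/
def MemE (γ T : ℝ) (a : ℝ → Pt → Fin 2 → M3) : Prop :=
  (∀ t ∈ Set.Icc (0 : ℝ) T, MemHk 1 (a t)) ∧ ∃ C, 0 ≤ C ∧ HolderE γ T C a

/-- `⟨∇f, a g⟩` pointwise. -/
def innAV (a : Pt → Fin 2 → M3) (f g : Pt → R3) (x : Pt) : ℝ :=
  ⟪pd 0 f x, a x 0 (g x)⟫_ℝ + ⟪pd 1 f x, a x 1 (g x)⟫_ℝ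

/-- The Fréchet derivative `F_v(t,a,v)φ` of `F` in `v`. -/
def FpertD (α : ℝ) (a : Pt → Fin 2 → M3) (v φ : Pt → R3) : Pt → R3 := fun x =>
  α • gaugeOp a φ x
    + α • ((2 * (⟪a x 0 (v x), a x 0 (φ x)⟫_ℝ + ⟪a x 1 (v x), a x 1 (φ x)⟫_ℝ)) • v x
        + (‖a x 0 (v x)‖ ^ 2 + ‖a x 1 (v x)‖ ^ 2) • φ x
        + (2 * innAV a φ v x) • v x + (2 * innAV a v φ x) • v x
        + (2 * innAV a v v x) • φ x)
    - cross3 (φ x) (gaugeOp a v x) - cross3 (v x) (gaugeOp a φ x)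

/-- The Fréchet derivative `H_v(t,a,v)φ` of `H` in `v`. -/
def HvD (α : ℝ) (a : Pt → Fin 2 → M3) (v φ : Pt → R3) : Pt → R3 := fun x =>
  α • lap φ x - cross3 (v x) (lap φ x) - cross3 (φ x) (lap v x)
    + α • (gradNormSq v x • φ x
        + (2 * (⟪pd 0 v x, pd 0 φ x⟫_ℝ + ⟪pd 1 v x, pd 1 φ x⟫_ℝ)) • v x)
    + FpertD α a v φ x

/-- Derivative of `a ↦ a·∇v + (∇·a)v + a²v` in direction `b`. -/
def gaugeOpMixed (a b : Pt → Fin 2 → M3) (v : Pt → R3) : Pt → R3 := fun x =>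
  b x 0 (pd 0 v x) + b x 1 (pd 1 v x) + divG b x (v x)
    + a x 0 (b x 0 (v x)) + b x 0 (a x 0 (v x))
    + a x 1 (b x 1 (v x)) + b x 1 (a x 1 (v x))

/-- The Fréchet derivative `H_a(t,a,v) b = F_a(t,a,v) b` of `H` in the parameter `a`,
evaluated on the direction `b` (both at the given time). -/
def HaD (α : ℝ) (a b : Pt → Fin 2 → M3) (v : Pt → R3) : Pt → R3 := fun x =>
  α • gaugeOpMixed a b v x
    + α • ((2 * (⟪a x 0 (v x), b x 0 (v x)⟫_ℝ + ⟪a x 1 (v x), b x 1 (v x)⟫_ℝ)) • v x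
        + (2 * innAV b v v x) • v x)
    - cross3 (v x) (gaugeOpMixed a b v x)

/-- A matrix is skew-symmetric, i.e. belongs to `𝔰𝔬(3)`. -/
def SkewM (M : M3) : Prop := ContinuousLinearMap.adjoint M = -M

/-- The zero-curvature (pure gauge) relation `∂₁A₂ − ∂₂A₁ + [A₁,A₂] = 0`. -/
def ZeroCurv (a : Pt → Fin 2 → M3) : Prop :=
  ∀ x : Pt,
    fderiv ℝ (fun y => a y 1) x (e2 0) - fderiv ℝ (fun y => a y 0) x (e2 1)
      + ((a x 0).comp (a x 1) - (a x 1).comp (a x 0)) = 0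

/-- The distributional product `m × Δm := ∇·(m × ∇m)`. -/
def mLap (m : Pt → R3) : Pt → R3 := fun x =>
  pd 0 (fun y => cross3 (m y) (pd 0 m y)) x + pd 1 (fun y => cross3 (m y) (pd 1 m y)) x

/-- Test functions: smooth and periodic, i.e. `C^∞(𝕋²; ℝ³)`. -/
def TestFn (ψ : Pt → R3) : Prop := (∀ n : ℕ, ContDiff ℝ n ψ) ∧ Per ψ

/-- Càdlàg (right-continuous with left limits) on `[a,b]`. -/
def CadlagOn (f : ℝ → ℝ) (a b : ℝ) : Prop :=
  (∀ t ∈ Set.Ico a b, Tendsto f (nhdsWithin t (Set.Ioi t)) (nhds (f t))) ∧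
  (∀ t ∈ Set.Ioc a b, ∃ L, Tendsto f (nhdsWithin t (Set.Iio t)) (nhds L))

/-- The matrix of the linear map `v ↦ v × w`, as a continuous linear map on `ℝ³`. -/
def crossCLM (w : R3) : M3 :=
  LinearMap.toContinuousLinearMap <| Matrix.toEuclideanLin <| Matrix.of
    ![![0, (WithLp.equiv 2 (Fin 3 → ℝ) w) 2, -(WithLp.equiv 2 (Fin 3 → ℝ) w) 1],
      ![-(WithLp.equiv 2 (Fin 3 → ℝ) w) 2, 0, (WithLp.equiv 2 (Fin 3 → ℝ) w) 0],
      ![(WithLp.equiv 2 (Fin 3 → ℝ) w) 1, -(WithLp.equiv 2 (Fin 3 → ℝ) w) 0, 0]]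

/-- A local `ℍ²`-solution of the parametrized equation `∂ₜ φ = H(t,z,φ)` on the time set
`s`, with initial data `u₀` at time `t₀`. -/
def IsLocalSolOn (α : ℝ) (z : ℝ → Pt → Fin 2 → M3) (u₀ : Pt → R3) (t₀ : ℝ)
    (u : ℝ → Pt → R3) (s : Set ℝ) : Prop :=
  u t₀ = u₀ ∧ (∀ t ∈ s, MemHk 2 (u t)) ∧ ContHkOn 2 u s ∧
    ∀ t ∈ s, t₀ < t → ∀ x, tderiv u t x = Hfun α (z t) (u t) x

/-- `(u, τ)` is an `ℍ²`-maximal solution of `∂ₜ φ = H(t,z,φ)`, `φ(t₀) = u₀`, on `[t₀,T]`: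
either `τ = T` and `u` solves the equation on all of `[t₀,T]`, or `τ ∈ (t₀,T]`, `u` solves
it on `[t₀,τ)` and admits no continuable extension in `ℍ²`. -/
def IsMaxSol (α : ℝ) (z : ℝ → Pt → Fin 2 → M3) (u₀ : Pt → R3) (t₀ T : ℝ)
    (u : ℝ → Pt → R3) (τ : ℝ) : Prop :=
  (τ = T ∧ IsLocalSolOn α z u₀ t₀ u (Set.Icc t₀ T)) ∨
  (t₀ < τ ∧ τ ≤ T ∧ IsLocalSolOn α z u₀ t₀ u (Set.Ico t₀ τ) ∧
    ¬ ∃ (τ' : ℝ) (u' : ℝ → Pt → R3), τ < τ' ∧ τ' ≤ T ∧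
      IsLocalSolOn α z u₀ t₀ u' (Set.Ico t₀ τ') ∧ ∀ t ∈ Set.Ico t₀ τ, u' t = u t)

end
noncomputable section

/-- The `(j,k)` entry of a matrix `M ∈ ℝ^{3×3}`. -/
def entM (M : M3) (j k : Fin 3) : ℝ := ⟪M (EuclideanSpace.single k 1), EuclideanSpace.single j 1⟫_ℝ

/-!
For the one-form `ω = f dg - g df`, the product being any symmetric bilinear form `B`, symmetry of
second derivatives gives `dω = 2 df ∧ dg`. Expanding the squares `B(∂₁f + ∂₂g, ∂₁f + ∂₂g)` and
`B(∂₂f - ∂₁g, ∂₂f - ∂₁g)` leaves exactly these mixed terms, which is the div-curl identity.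

For gauge fields take `B(M, N) = Tr(MN)`, applied to the operators themselves rather than entry by
entry. Derivatives of skew-adjoint fields are skew-adjoint, and `Tr(MM) = -|M|²` there; the zero
curvature relation turns the curl into the commutator.
-/

section Bilinear

variable {𝕜 X F G : Type*} [RCLike 𝕜] [NormedAddCommGroup X] [NormedSpace 𝕜 X]
  [NormedAddCommGroup F] [NormedSpace 𝕜 F] [NormedAddCommGroup G] [NormedSpace 𝕜 G]
  {f g : X → F} {x : X}

theorem differentiableAt_fderiv_of_contDiffAt (hf : ContDiffAt 𝕜 2 f x) :
    DifferentiableAt 𝕜 (fderiv 𝕜 f) x :=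
  (hf.fderiv_right (m := 1) (by norm_num)).differentiableAt one_ne_zero

theorem fderiv_fderiv_apply (hf : ContDiffAt 𝕜 2 f x) (u v : X) :
    fderiv 𝕜 (fun y => fderiv 𝕜 f y u) x v = fderiv 𝕜 (fderiv 𝕜 f) x v u := by
  simp [fderiv_clm_apply (differentiableAt_fderiv_of_contDiffAt hf) (differentiableAt_const u)]

theorem fderiv_fderiv_apply_comm (hf : ContDiffAt 𝕜 2 f x) (u v : X) :
    fderiv 𝕜 (fun y => fderiv 𝕜 f y u) x v = fderiv 𝕜 (fun y => fderiv 𝕜 f y v) x u := by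
  rw [fderiv_fderiv_apply hf, fderiv_fderiv_apply hf]
  exact hf.isSymmSndFDerivAt (by simp) v u

theorem fderiv_bilin_sub_bilin (B : F →L[𝕜] F →L[𝕜] G) (hf : ContDiffAt 𝕜 2 f x)
    (hg : ContDiffAt 𝕜 2 g x) (u v : X) :
    fderiv 𝕜 (fun y => B (f y) (fderiv 𝕜 g y u) - B (g y) (fderiv 𝕜 f y u)) x v =
      B (f x) (fderiv 𝕜 (fun y => fderiv 𝕜 g y u) x v) + B (fderiv 𝕜 f x v) (fderiv 𝕜 g x u) -
        (B (g x) (fderiv 𝕜 (fun y => fderiv 𝕜 f y u) x v) +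
          B (fderiv 𝕜 g x v) (fderiv 𝕜 f x u)) := by
  have hf₁ : DifferentiableAt 𝕜 f x := hf.differentiableAt two_ne_zero
  have hg₁ : DifferentiableAt 𝕜 g x := hg.differentiableAt two_ne_zero
  have hf₂ : DifferentiableAt 𝕜 (fun y => fderiv 𝕜 f y u) x :=
    (differentiableAt_fderiv_of_contDiffAt hf).clm_apply (differentiableAt_const u)
  have hg₂ : DifferentiableAt 𝕜 (fun y => fderiv 𝕜 g y u) x :=
    (differentiableAt_fderiv_of_contDiffAt hg).clm_apply (differentiableAt_const u)
  rw [fderiv_fun_sub (by fun_prop) (by fun_prop), B.fderiv_of_bilinear hf₁ hg₂,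
    B.fderiv_of_bilinear hg₁ hf₂]
  rfl

theorem curl_bilin_sub_bilin (B : F →L[𝕜] F →L[𝕜] G) (hB : ∀ a b, B a b = B b a)
    (hf : ContDiffAt 𝕜 2 f x) (hg : ContDiffAt 𝕜 2 g x) (u v : X) :
    fderiv 𝕜 (fun y => B (f y) (fderiv 𝕜 g y u) - B (g y) (fderiv 𝕜 f y u)) x v -
        fderiv 𝕜 (fun y => B (f y) (fderiv 𝕜 g y v) - B (g y) (fderiv 𝕜 f y v)) x u =
      (2 : 𝕜) • (B (fderiv 𝕜 f x v) (fderiv 𝕜 g x u) -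
        B (fderiv 𝕜 f x u) (fderiv 𝕜 g x v)) := by
  rw [fderiv_bilin_sub_bilin B hf hg, fderiv_bilin_sub_bilin B hf hg,
    fderiv_fderiv_apply_comm hf u v, fderiv_fderiv_apply_comm hg u v,
    hB (fderiv 𝕜 g x v), hB (fderiv 𝕜 g x u)]
  module

theorem bilin_div_curl_identity (B : F →L[𝕜] F →L[𝕜] G) (hB : ∀ a b, B a b = B b a)
    (hf : ContDiffAt 𝕜 2 f x) (hg : ContDiffAt 𝕜 2 g x) (u v : X) :
    B (fderiv 𝕜 f x u) (fderiv 𝕜 f x u) + B (fderiv 𝕜 g x u) (fderiv 𝕜 g x u) +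
        (B (fderiv 𝕜 f x v) (fderiv 𝕜 f x v) + B (fderiv 𝕜 g x v) (fderiv 𝕜 g x v)) =
      B (fderiv 𝕜 f x u + fderiv 𝕜 g x v) (fderiv 𝕜 f x u + fderiv 𝕜 g x v) +
        B (fderiv 𝕜 f x v - fderiv 𝕜 g x u) (fderiv 𝕜 f x v - fderiv 𝕜 g x u) +
        (fderiv 𝕜 (fun y => B (f y) (fderiv 𝕜 g y u) - B (g y) (fderiv 𝕜 f y u)) x v -
          fderiv 𝕜 (fun y => B (f y) (fderiv 𝕜 g y v) - B (g y) (fderiv 𝕜 f y v)) x u) := by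
  rw [curl_bilin_sub_bilin B hB hf hg]
  simp only [map_add, map_sub, add_apply, sub_apply,
    hB (fderiv 𝕜 g x v) (fderiv 𝕜 f x u), hB (fderiv 𝕜 g x u) (fderiv 𝕜 f x v)]
  module

end Bilinear

theorem fderiv_mem_skewAdjoint {X F : Type*} [NormedAddCommGroup X] [NormedSpace ℝ X]
    [NormedAddCommGroup F] [NormedSpace ℝ F] [StarAddMonoid F] [StarModule ℝ F] [ContinuousStar F]
    {f : X → F} {x : X} (hf : ∀ᶠ y in 𝓝 x, f y ∈ skewAdjoint F) (v : X) :
    fderiv ℝ f x v ∈ skewAdjoint F := by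
  have hstar : (fun y => star (f y)) =ᶠ[𝓝 x] fun y => -f y :=
    hf.mono fun y hy => skewAdjoint.mem_iff.1 hy
  have hderiv : fderiv ℝ (fun y => star (f y)) x v = -fderiv ℝ f x v := by
    rw [hstar.fderiv_eq, fderiv_fun_neg, neg_apply]
  rw [skewAdjoint.mem_iff, ← hderiv, fderiv_star]
  rfl

section Operators

variable {X E ι : Type*} [NormedAddCommGroup X] [NormedSpace ℝ X]
  [NormedAddCommGroup E] [InnerProductSpace ℝ E]

/-- The `(j, k)` matrix entry `⟪M (e k), e j⟫` of an operator `M` along a family of vectors `e`,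
as a continuous linear functional of `M`. -/
def matrixEntry (e : ι → E) (j k : ι) : (E →L[ℝ] E) →L[ℝ] ℝ :=
  (innerSL ℝ : E →L[ℝ] E →L[ℝ] ℝ).flip (e j) ∘L ContinuousLinearMap.apply ℝ E (e k)

theorem matrixEntry_apply (e : ι → E) (j k : ι) (M : E →L[ℝ] E) :
    matrixEntry e j k M = ⟪M (e k), e j⟫_ℝ :=
  rfl

theorem fderiv_matrixEntry (e : ι → E) (j k : ι) {M : X → E →L[ℝ] E} {x : X}
    (hM : DifferentiableAt ℝ M x) (v : X) :
    fderiv ℝ (fun y => matrixEntry e j k (M y)) x v = matrixEntry e j k (fderiv ℝ M x v) := by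
  rw [fderiv_fun_comp x (matrixEntry e j k).differentiableAt hM, ContinuousLinearMap.fderiv]
  rfl

theorem matrixEntry_swap_of_mem_skewAdjoint [CompleteSpace E] (e : ι → E) (j k : ι)
    {M : E →L[ℝ] E} (hM : M ∈ skewAdjoint (E →L[ℝ] E)) :
    matrixEntry e k j M = -matrixEntry e j k M := by
  rw [matrixEntry_apply, matrixEntry_apply, ← ContinuousLinearMap.adjoint_inner_right,
    ← ContinuousLinearMap.star_eq_adjoint, skewAdjoint.mem_iff.1 hM, neg_apply,
    inner_neg_right, real_inner_comm]

variable [Fintype ι]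

/-- The trace form `(M, N) ↦ Tr(MN)`, computed from the matrix entries along `e`; it is the
actual trace when `e` is an orthonormal basis. -/
def traceForm (e : ι → E) : (E →L[ℝ] E) →L[ℝ] (E →L[ℝ] E) →L[ℝ] ℝ :=
  ∑ j, ∑ k, (ContinuousLinearMap.mul ℝ ℝ).bilinearComp (matrixEntry e j k) (matrixEntry e k j)

theorem traceForm_apply (e : ι → E) (M N : E →L[ℝ] E) :
    traceForm e M N = ∑ j, ∑ k, matrixEntry e j k M * matrixEntry e k j N := by
  simp [traceForm]

theorem traceForm_comm (e : ι → E) (M N : E →L[ℝ] E) : traceForm e M N = traceForm e N M := by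
  rw [traceForm_apply, traceForm_apply, Finset.sum_comm]
  simp only [mul_comm]

theorem sum_matrixEntry_sq_of_mem_skewAdjoint [CompleteSpace E] (e : ι → E) {M : E →L[ℝ] E}
    (hM : M ∈ skewAdjoint (E →L[ℝ] E)) :
    ∑ j, ∑ k, matrixEntry e j k M ^ 2 = -traceForm e M M := by
  simp only [traceForm_apply, ← Finset.sum_neg_distrib]
  refine Finset.sum_congr rfl fun j _ => Finset.sum_congr rfl fun k _ => ?_
  rw [matrixEntry_swap_of_mem_skewAdjoint e j k hM]
  ring

theorem sum_matrixEntry_mul_fderiv_sub (e : ι → E) {M N : X → E →L[ℝ] E} {y : X}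
    (hM : DifferentiableAt ℝ M y) (hN : DifferentiableAt ℝ N y) (v : X) :
    ∑ j, ∑ k, (matrixEntry e j k (M y) * fderiv ℝ (fun z => matrixEntry e k j (N z)) y v -
        matrixEntry e j k (N y) * fderiv ℝ (fun z => matrixEntry e k j (M z)) y v) =
      traceForm e (M y) (fderiv ℝ N y v) - traceForm e (N y) (fderiv ℝ M y v) := by
  simp only [fderiv_matrixEntry e _ _ hM, fderiv_matrixEntry e _ _ hN, traceForm_apply,
    Finset.sum_sub_distrib]

theorem fderiv_sum_matrixEntry_mul_fderiv_sub (e : ι → E) {M N : X → E →L[ℝ] E} {x : X}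
    (hM : ContDiffAt ℝ 2 M x) (hN : ContDiffAt ℝ 2 N x) (u : X) :
    fderiv ℝ (fun y => ∑ j, ∑ k,
        (matrixEntry e j k (M y) * fderiv ℝ (fun z => matrixEntry e k j (N z)) y u -
          matrixEntry e j k (N y) * fderiv ℝ (fun z => matrixEntry e k j (M z)) y u)) x =
      fderiv ℝ (fun y =>
        traceForm e (M y) (fderiv ℝ N y u) - traceForm e (N y) (fderiv ℝ M y u)) x := by
  refine Filter.EventuallyEq.fderiv_eq ?_
  filter_upwards [hM.eventually (by simp), hN.eventually (by simp)] with y hMy hNy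
  exact sum_matrixEntry_mul_fderiv_sub e (hMy.differentiableAt two_ne_zero)
    (hNy.differentiableAt two_ne_zero) u

theorem sum_matrixEntry_sq_div_curl_identity [CompleteSpace E] (e : ι → E)
    {M N : X → E →L[ℝ] E} {x : X} (hM : ContDiffAt ℝ 2 M x) (hN : ContDiffAt ℝ 2 N x)
    (hMskew : ∀ᶠ y in 𝓝 x, M y ∈ skewAdjoint (E →L[ℝ] E))
    (hNskew : ∀ᶠ y in 𝓝 x, N y ∈ skewAdjoint (E →L[ℝ] E)) (u v : X) :
    ∑ j, ∑ k, (matrixEntry e j k (fderiv ℝ M x u) ^ 2 + matrixEntry e j k (fderiv ℝ M x v) ^ 2 +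
        (matrixEntry e j k (fderiv ℝ N x u) ^ 2 + matrixEntry e j k (fderiv ℝ N x v) ^ 2)) =
      ∑ j, ∑ k, matrixEntry e j k (fderiv ℝ M x u + fderiv ℝ N x v) ^ 2 +
        ∑ j, ∑ k, matrixEntry e j k (fderiv ℝ M x v - fderiv ℝ N x u) ^ 2 -
        (fderiv ℝ (fun y =>
            traceForm e (M y) (fderiv ℝ N y u) - traceForm e (N y) (fderiv ℝ M y u)) x v -
          fderiv ℝ (fun y =>
            traceForm e (M y) (fderiv ℝ N y v) - traceForm e (N y) (fderiv ℝ M y v)) x u) := by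
  have hM' := fderiv_mem_skewAdjoint hMskew
  have hN' := fderiv_mem_skewAdjoint hNskew
  simp only [Finset.sum_add_distrib, sum_matrixEntry_sq_of_mem_skewAdjoint e (hM' _),
    sum_matrixEntry_sq_of_mem_skewAdjoint e (hN' _),
    sum_matrixEntry_sq_of_mem_skewAdjoint e (add_mem (hM' u) (hN' v)),
    sum_matrixEntry_sq_of_mem_skewAdjoint e (sub_mem (hM' v) (hN' u))]
  linarith [bilin_div_curl_identity (traceForm e) (traceForm_comm e) hM hN u v]

end Operators

theorem div_curl_identity_general {X E ι : Type*} [NormedAddCommGroup X] [NormedSpace ℝ X]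
    [NormedAddCommGroup E] [InnerProductSpace ℝ E] [CompleteSpace E] [Fintype ι]
    (d : Fin 2 → X) (e : ι → E) (x : X) :
    (∀ b : X → ℝ × ℝ, ContDiffAt ℝ 2 b x →
      ∑ i, (fderiv ℝ (fun y => (b y).1) x (d i) ^ 2 + fderiv ℝ (fun y => (b y).2) x (d i) ^ 2) =
        (fderiv ℝ (fun y => (b y).1) x (d 0) + fderiv ℝ (fun y => (b y).2) x (d 1)) ^ 2 +
        (fderiv ℝ (fun y => (b y).1) x (d 1) - fderiv ℝ (fun y => (b y).2) x (d 0)) ^ 2 +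
        (fderiv ℝ (fun y => (b y).1 * fderiv ℝ (fun z => (b z).2) y (d 0) -
            (b y).2 * fderiv ℝ (fun z => (b z).1) y (d 0)) x (d 1) -
          fderiv ℝ (fun y => (b y).1 * fderiv ℝ (fun z => (b z).2) y (d 1) -
            (b y).2 * fderiv ℝ (fun z => (b z).1) y (d 1)) x (d 0))) ∧
    (∀ A : X → Fin 2 → E →L[ℝ] E, ContDiffAt ℝ 2 A x →
      (∀ᶠ y in 𝓝 x, ∀ i, A y i ∈ skewAdjoint (E →L[ℝ] E)) →
      fderiv ℝ (fun y => A y 1) x (d 0) - fderiv ℝ (fun y => A y 0) x (d 1) + ⁅A x 0, A x 1⁆ = 0 →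
      ∑ j, ∑ k, ∑ i, ∑ l, fderiv ℝ (fun y => matrixEntry e j k (A y i)) x (d l) ^ 2 =
        ∑ j, ∑ k, (fderiv ℝ (fun y => matrixEntry e j k (A y 0)) x (d 0) +
          fderiv ℝ (fun y => matrixEntry e j k (A y 1)) x (d 1)) ^ 2 +
        ∑ j, ∑ k, matrixEntry e j k ⁅A x 0, A x 1⁆ ^ 2 -
        (fderiv ℝ (fun y => ∑ j, ∑ k,
            (matrixEntry e j k (A y 0) * fderiv ℝ (fun z => matrixEntry e k j (A z 1)) y (d 0) -
              matrixEntry e j k (A y 1) *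
                fderiv ℝ (fun z => matrixEntry e k j (A z 0)) y (d 0))) x (d 1) -
          fderiv ℝ (fun y => ∑ j, ∑ k,
            (matrixEntry e j k (A y 0) * fderiv ℝ (fun z => matrixEntry e k j (A z 1)) y (d 1) -
              matrixEntry e j k (A y 1) *
                fderiv ℝ (fun z => matrixEntry e k j (A z 0)) y (d 1))) x (d 0))) := by
  constructor
  · intro b hb
    simpa only [Fin.sum_univ_two, pow_two, ContinuousLinearMap.mul_apply'] using
      bilin_div_curl_identity (ContinuousLinearMap.mul ℝ ℝ) mul_comm hb.fst hb.snd (d 0) (d 1)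
  · intro A hA hskew hcurv
    have hA₂ (i) : ContDiffAt ℝ 2 (fun y => A y i) x := contDiffAt_pi.1 hA i
    have hA₁ (i) : DifferentiableAt ℝ (fun y => A y i) x := (hA₂ i).differentiableAt two_ne_zero
    have hcomm : ⁅A x 0, A x 1⁆ =
        fderiv ℝ (fun y => A y 0) x (d 1) - fderiv ℝ (fun y => A y 1) x (d 0) := by
      rw [← sub_eq_zero, ← hcurv]
      abel
    simpa only [Fin.sum_univ_two, hcomm, fderiv_matrixEntry e _ _ (hA₁ _), ← map_add,
      fderiv_sum_matrixEntry_mul_fderiv_sub e (hA₂ 0) (hA₂ 1)] using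
      sum_matrixEntry_sq_div_curl_identity e (hA₂ 0) (hA₂ 1) (hskew.mono fun y hy => hy 0)
        (hskew.mono fun y hy => hy 1) (d 0) (d 1)

/-- **Div–curl decomposition of the gradient, and its consequence for pure gauges.**
(1) For a `C²` vector field `b = (b₁,b₂)` on `ℝ²`, pointwise
`|∇b|² = |∇·b|² + |∇⊥·b|² + ∇⊥·(b₁∇b₂ − b₂∇b₁)`, where `∇⊥ = (∂₂, −∂₁)`.
(2) Consequently, for a pair `A = (A₁,A₂)` of `𝔰𝔬(3)`-valued fields on `𝕋²` with zero
curvature `∂₁A₂ − ∂₂A₁ + [A₁,A₂] = 0`, applying (1) to each matrix component gives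
`|∇A|² = |∇·A|² + |[A₁,A₂]|² − ∇⊥· Tr(A₁∇A₂ − A₂∇A₁)` pointwise. -/
theorem div_curl_identity :
    (∀ b : Pt → ℝ × ℝ, ContDiff ℝ 2 b → ∀ x : Pt,
      (∑ i : Fin 2, ((pd i (fun y => (b y).1) x) ^ 2 + (pd i (fun y => (b y).2) x) ^ 2)) =
        (pd 0 (fun y => (b y).1) x + pd 1 (fun y => (b y).2) x) ^ 2 +
        (pd 1 (fun y => (b y).1) x - pd 0 (fun y => (b y).2) x) ^ 2 +
        (pd 1 (fun y => (b y).1 * pd 0 (fun z => (b z).2) y -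
            (b y).2 * pd 0 (fun z => (b z).1) y) x -
          pd 0 (fun y => (b y).1 * pd 1 (fun z => (b z).2) y -
            (b y).2 * pd 1 (fun z => (b z).1) y) x)) ∧
    (∀ A : Pt → Fin 2 → M3, ContDiff ℝ 2 A → Per A →
      (∀ x i, SkewM (A x i)) → ZeroCurv A → ∀ x : Pt,
      (∑ j : Fin 3, ∑ k : Fin 3, ∑ i : Fin 2, ∑ l : Fin 2,
          (pd l (fun y => entM (A y i) j k) x) ^ 2) =
        (∑ j : Fin 3, ∑ k : Fin 3,
          (pd 0 (fun y => entM (A y 0) j k) x + pd 1 (fun y => entM (A y 1) j k) x) ^ 2) +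
        (∑ j : Fin 3, ∑ k : Fin 3,
          (entM ((A x 0).comp (A x 1) - (A x 1).comp (A x 0)) j k) ^ 2) -
        (pd 1 (fun y => ∑ j : Fin 3, ∑ k : Fin 3,
            (entM (A y 0) j k * pd 0 (fun z => entM (A z 1) k j) y -
              entM (A y 1) j k * pd 0 (fun z => entM (A z 0) k j) y)) x -
          pd 0 (fun y => ∑ j : Fin 3, ∑ k : Fin 3,
            (entM (A y 0) j k * pd 1 (fun z => entM (A z 1) k j) y -
              entM (A y 1) j k * pd 1 (fun z => entM (A z 0) k j) y)) x)) := by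
  have general := div_curl_identity_general e2 fun i : Fin 3 => EuclideanSpace.single i (1 : ℝ)
  exact ⟨fun b hb x => (general x).1 b hb.contDiffAt, fun A hA _ hskew hcurv x =>
    (general x).2 A hA.contDiffAt (.of_forall hskew) (hcurv x)⟩

end
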